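/- Let q ∈ ℂ with 0 < |q| < 1 and let h be a holomorphic function on ℂ∖{0} satisfying the q-difference equation of the 4₁ knot, tq·h(qt) + (1 − 2t)·h(t) + tq^{−1}·h(q^{−1}t) = 0, for every t ≠ 0. Then there exists a constant C ∈ ℂ such that h(t) = C · g^{(0,0)}(t,q) for all t ≠ 0. -/

import Mathlib

open Finset Filter

/-- Finite q-Pochhammer symbol `(x;q)_k = ∏_{j=0}^{k-1} (1 - x q^j)`. -/
noncomputable def qPoch (x q : ℂ) (k : ℕ) : ℂ := ∏ j ∈ Finset.range k, (1 - x * q ^ j)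

/-- Infinite q-Pochhammer symbol `(x;q)_∞ = ∏_{j=0}^{∞} (1 - x q^j)`. -/
noncomputable def qPochInf (x q : ℂ) : ℂ := ∏' j : ℕ, (1 - x * q ^ j)

/-- The Jacobi theta function `θ(t;q) = Σ_{k∈ℤ} (−1)^k q^{k(k+1)/2} t^k`. -/
noncomputable def jtheta (t q : ℂ) : ℂ :=
  ∑' k : ℤ, (-1 : ℂ) ^ k * q ^ (k * (k + 1) / 2) * t ^ k

/-- The derivative `θ'(t;q) = Σ_{k∈ℤ} (−1)^k k q^{k(k+1)/2} t^k` (with respect to t d/dt). -/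
noncomputable def jthetaD (t q : ℂ) : ℂ :=
  ∑' k : ℤ, (-1 : ℂ) ^ k * (k : ℂ) * q ^ (k * (k + 1) / 2) * t ^ k

/-- The Eisenstein-type series `E₁(q) = 1 − 4 Σ_{j=1}^∞ q^j/(1−q^j)`. -/
noncomputable def E1 (q : ℂ) : ℂ := 1 - 4 * ∑' j : ℕ, q ^ (j + 1) / (1 - q ^ (j + 1))

/-- The Appell-Lerch sum
`AL(t,λ,q) = θ(λ;q)⁻¹ Σ_{ℓ∈ℤ} (−1)^ℓ q^{ℓ(ℓ+1)/2} λ^ℓ / (1 − λ t q^ℓ)`. -/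
noncomputable def AL (t lam q : ℂ) : ℂ :=
  (jtheta lam q)⁻¹ *
    ∑' k : ℤ, (-1 : ℂ) ^ k * q ^ (k * (k + 1) / 2) * lam ^ k / (1 - lam * t * q ^ k)

/-- The solution `g^{(0,0)}(t,q) = Σ_{k≥0} (−1)^k q^{k(k+1)/2} (q;q)_k^{−2} t^{−1−k}`. -/
noncomputable def g00 (t q : ℂ) : ℂ :=
  ∑' k : ℕ, (-1 : ℂ) ^ k * q ^ (k * (k + 1) / 2) / (qPoch q q k) ^ 2 * t ^ (-1 - (k : ℤ))

/-- The solution `g^{(0,1)}(t,q)`. -/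
noncomputable def g01 (t q : ℂ) : ℂ :=
  ∑' k : ℕ,
    (E1 q / 2 - 1 / 2 - jthetaD t⁻¹ q / jtheta t⁻¹ q +
        ∑ j ∈ Finset.range k, (1 + q ^ (j + 1)) / (1 - q ^ (j + 1))) *
      ((-1 : ℂ) ^ k * q ^ (k * (k + 1) / 2) / (qPoch q q k) ^ 2 * t ^ (-1 - (k : ℤ)))

lemma avg_radius (g : ℂ → ℂ) (hg : ∀ z : ℂ, z ≠ 0 → DifferentiableAt ℂ g z) (r R : ℝ)
    (hr : 0 < r) (hrR : r ≤ R) : Real.circleAverage g 0 R = Real.circleAverage g 0 r := by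
  rw [Real.circleAverage_eq_circleIntegral (hr.trans_le hrR).ne',
    Real.circleAverage_eq_circleIntegral hr.ne']
  congr 1
  refine Complex.circleIntegral_sub_center_inv_smul_eq_of_differentiable_on_annulus_off_countable
    hr hrR Set.countable_empty ?_ ?_
  · intro z hz
    refine (hg z ?_).continuousAt.continuousWithinAt
    rintro rfl
    exact hz.2 (Metric.mem_ball_self hr)
  · intro z hz
    refine hg z ?_
    rintro rfl
    exact hz.1.2 (Metric.mem_closedBall_self hr.le)

lemma avg_scale (g : ℂ → ℂ) (hg : ∀ z : ℂ, z ≠ 0 → DifferentiableAt ℂ g z) (s : ℂ) (hs : s ≠ 0) :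
    Real.circleAverage (fun z => g (s * z)) 0 1 = Real.circleAverage g 0 1 := by
  have h1 : Real.circleAverage (fun z => g (s * z)) 0 1 = Real.circleAverage g 0 ‖s‖ := by
    rw [Real.circleAverage_eq_integral_add (f := g) (Complex.arg s), Real.circleAverage_def]
    congr 2
    ext θ
    congr 1
    simp only [circleMap, zero_add, Complex.ofReal_one, one_mul, Complex.ofReal_add, add_mul,
      Complex.exp_add]
    conv_lhs => rw [← Complex.norm_mul_exp_arg_mul_I s]
    ring
  rw [h1]
  rcases le_total ‖s‖ 1 with h | h
  · exact (avg_radius g hg _ _ (norm_pos_iff.2 hs) h).symm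
  · exact avg_radius g hg _ _ one_pos h

/-- Laurent coefficient. -/
noncomputable def lcoef (h : ℂ → ℂ) (n : ℤ) : ℂ := Real.circleAverage (fun z => z ^ (-n) * h z) 0 1

lemma lcoef_scale (h : ℂ → ℂ) (hh : ∀ z : ℂ, z ≠ 0 → DifferentiableAt ℂ h z) (s : ℂ) (hs : s ≠ 0)
    (n : ℤ) : Real.circleAverage (fun z => z ^ (-n) * h (s * z)) 0 1 = s ^ n * lcoef h n := by
  have := avg_scale (fun z => z ^ (-n) * h z)
    (fun z hz => (differentiableAt_zpow.2 (Or.inl hz)).mul (hh z hz)) s hs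
  rw [lcoef, ← this, ← smul_eq_mul, ← Real.circleAverage_fun_smul]
  congr 1
  ext z
  simp only [smul_eq_mul, mul_zpow, zpow_neg]
  field_simp

lemma cint (h : ℂ → ℂ) (hh : ∀ z : ℂ, z ≠ 0 → DifferentiableAt ℂ h z) (s : ℂ) (hs : s ≠ 0)
    (n : ℤ) (c : ℂ) : CircleIntegrable (fun z => c * (z ^ (-n) * h (s * z))) 0 1 := by
  apply ContinuousOn.circleIntegrable zero_le_one
  intro z hz
  have hz0 : z ≠ 0 := by
    rintro rfl
    simp at hz
  have h1 : ContinuousAt (fun z => h (s * z)) z :=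
    ContinuousAt.comp (g := h) (f := fun z => s * z) (hh _ (mul_ne_zero hs hz0)).continuousAt
      (by fun_prop)
  exact (continuousAt_const.mul
    ((continuousAt_zpow₀ z (-n) (Or.inl hz0)).mul h1)).continuousWithinAt

lemma lcoef_rec (q : ℂ) (hq : q ≠ 0)
    (h : ℂ → ℂ) (hh : ∀ t : ℂ, t ≠ 0 → DifferentiableAt ℂ h t)
    (heq : ∀ t : ℂ, t ≠ 0 →
      t * q * h (q * t) + (1 - 2 * t) * h t + t * q⁻¹ * h (q⁻¹ * t) = 0) (n : ℤ) :
    q * (q ^ n * lcoef h n) + lcoef h (n + 1) + (-2) * lcoef h n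
      + q⁻¹ * ((q⁻¹) ^ n * lcoef h n) = 0 := by
  have e1 : lcoef h (n+1) = 1 * Real.circleAverage (fun z => z ^ (-(n+1)) * h (1 * z)) 0 1 := by
    simp [lcoef]
  have e2 : (-2) * lcoef h n = (-2) * Real.circleAverage (fun z => z ^ (-n) * h (1 * z)) 0 1 := by
    simp [lcoef]
  rw [← lcoef_scale h hh q hq, ← lcoef_scale h hh q⁻¹ (inv_ne_zero hq), e1, e2]
  simp only [← smul_eq_mul (a := q), ← smul_eq_mul (a := (1:ℂ)) (b := Real.circleAverage _ _ _),
    ← smul_eq_mul (a := (-2:ℂ)), ← smul_eq_mul (a := q⁻¹) (b := Real.circleAverage _ _ _),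
    ← Real.circleAverage_fun_smul]
  have i1 := cint h hh q hq n q
  have i2 := cint h hh 1 one_ne_zero (n+1) 1
  have i3 := cint h hh 1 one_ne_zero n (-2)
  have i4 := cint h hh q⁻¹ (inv_ne_zero hq) n q⁻¹
  simp only [smul_eq_mul]
  rw [← Real.circleAverage_add i1 i2, ← Real.circleAverage_add (i1.add i2) i3,
    ← Real.circleAverage_add ((i1.add i2).add i3) i4]
  apply Real.circleAverage_const_on_circle
  intro z hz
  have hz0 : z ≠ 0 := by
    rintro rfl
    simp at hz
  have := heq z hz0
  have e : z ^ (-n) = z ^ (-(n+1)) * z := by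
    rw [← zpow_add_one₀ hz0]; congr 1; ring
  simp only [Pi.add_apply]
  rw [e, one_mul z]
  linear_combination z ^ (-(n+1)) * this

lemma one_sub_ne (q : ℂ) (hq1 : ‖q‖ < 1) (k : ℕ) : 1 - q ^ (k+1) ≠ 0 := by
  intro h0
  have : ‖q ^ (k+1)‖ < 1 := by
    rw [norm_pow]; exact pow_lt_one₀ (norm_nonneg _) hq1 (by omega)
  rw [← sub_eq_zero.1 h0] at this
  simp at this

/-- Coefficient of `g00`. -/
noncomputable def gc (q : ℂ) (k : ℕ) : ℂ := (-1 : ℂ) ^ k * q ^ (k * (k + 1) / 2) / (qPoch q q k) ^ 2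

lemma qPoch_ne (q : ℂ) (hq1 : ‖q‖ < 1) (k : ℕ) : qPoch q q k ≠ 0 := by
  rw [qPoch, Finset.prod_ne_zero_iff]
  intro j _
  rw [← pow_succ']
  exact one_sub_ne q hq1 j

lemma gc_succ (q : ℂ) (hq1 : ‖q‖ < 1) (k : ℕ) :
    gc q (k+1) = gc q k * (-(q ^ (k+1)) / (1 - q ^ (k+1)) ^ 2) := by
  have e : (k+1) * (k+1+1) / 2 = k * (k+1) / 2 + (k+1) := by
    rw [show (k+1) * (k+1+1) = k * (k+1) + (k+1) * 2 by ring, Nat.add_mul_div_right _ _ two_pos]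
  have h1 := one_sub_ne q hq1 k
  have h2 := qPoch_ne q hq1 k
  have e2 : qPoch q q (k+1) = qPoch q q k * (1 - q ^ (k+1)) := by
    rw [qPoch, Finset.prod_range_succ, ← pow_succ', qPoch]
  rw [gc, gc, e, e2]
  field_simp
  ring

lemma gc_ne (q : ℂ) (hq : q ≠ 0) (hq1 : ‖q‖ < 1) (k : ℕ) : gc q k ≠ 0 :=
  div_ne_zero (mul_ne_zero (pow_ne_zero _ (by norm_num)) (pow_ne_zero _ hq))
    (pow_ne_zero _ (qPoch_ne q hq1 k))

lemma gc_summable (q : ℂ) (hq : q ≠ 0) (hq1 : ‖q‖ < 1) (t : ℂ) (ht : t ≠ 0) :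
    Summable (fun k : ℕ => gc q k * t ^ (-1 - (k : ℤ))) := by
  apply summable_of_ratio_test_tendsto_lt_one (l := 0) zero_lt_one
  · exact Eventually.of_forall fun k => mul_ne_zero (gc_ne q hq hq1 k) (zpow_ne_zero _ ht)
  · have hp : Tendsto (fun k : ℕ => q ^ (k+1)) atTop (nhds 0) :=
      (tendsto_pow_atTop_nhds_zero_of_norm_lt_one hq1).comp (tendsto_add_atTop_nat 1)
    have h2 : Tendsto (fun k : ℕ => ‖(-(q ^ (k+1)) / (1 - q ^ (k+1)) ^ 2) * t⁻¹‖) atTop (nhds 0) := by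
      have := (((hp.neg).div ((hp.const_sub 1).pow 2) (by simp)).mul_const t⁻¹).norm
      simpa using this
    refine h2.congr fun k => ?_
    rw [← norm_div, gc_succ q hq1 k]
    congr 1
    have e : t ^ (-1 - ((k+1 : ℕ) : ℤ)) = t ^ (-1 - (k:ℤ)) * t⁻¹ := by
      rw [← zpow_sub_one₀ ht]; congr 1; push_cast; ring
    rw [e]
    have := gc_ne q hq hq1 k
    have := zpow_ne_zero (-1 - (k:ℤ)) ht
    field_simp

lemma lcoef_nonneg (q : ℂ) (hq : q ≠ 0)
    (h : ℂ → ℂ) (hh : ∀ t : ℂ, t ≠ 0 → DifferentiableAt ℂ h t)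
    (heq : ∀ t : ℂ, t ≠ 0 →
      t * q * h (q * t) + (1 - 2 * t) * h t + t * q⁻¹ * h (q⁻¹ * t) = 0) (n : ℕ) :
    lcoef h n = 0 := by
  induction n with
  | zero =>
    have := lcoef_rec q hq h hh heq (-1)
    simp only [zpow_neg, zpow_one, inv_inv, neg_add_cancel] at this
    have e := mul_inv_cancel₀ hq
    simp only [Nat.cast_zero]
    linear_combination this - 2 * e * lcoef h (-1)
  | succ n ih =>
    have := lcoef_rec q hq h hh heq n
    rw [ih] at this
    push_cast
    simpa using this

lemma lcoef_neg (q : ℂ) (hq : q ≠ 0) (hq1 : ‖q‖ < 1)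
    (h : ℂ → ℂ) (hh : ∀ t : ℂ, t ≠ 0 → DifferentiableAt ℂ h t)
    (heq : ∀ t : ℂ, t ≠ 0 →
      t * q * h (q * t) + (1 - 2 * t) * h t + t * q⁻¹ * h (q⁻¹ * t) = 0) (k : ℕ) :
    lcoef h (-1 - (k : ℤ)) = lcoef h (-1) * gc q k := by
  induction k with
  | zero => simp [gc, qPoch]
  | succ k ih =>
    have := lcoef_rec q hq h hh heq (-1 - ((k+1 : ℕ) : ℤ))
    rw [show -1 - ((k+1 : ℕ) : ℤ) + 1 = -1 - (k : ℤ) by push_cast; ring, ih] at this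
    rw [gc_succ q hq1]
    have h1 := one_sub_ne q hq1 k
    have hk : q ^ (k+1) ≠ 0 := pow_ne_zero _ hq
    set X := lcoef h (-1 - ((k+1 : ℕ) : ℤ))
    have e1 : q * q ^ (-1 - ((k+1 : ℕ) : ℤ)) = (q ^ (k+1))⁻¹ := by
      rw [← zpow_one_add₀ hq, ← zpow_natCast, ← zpow_neg]; congr 1; push_cast; ring
    have e2 : q⁻¹ * q⁻¹ ^ (-1 - ((k+1 : ℕ) : ℤ)) = q ^ (k+1) := by
      rw [← zpow_one_add₀ (inv_ne_zero hq), ← zpow_natCast q, inv_zpow, ← zpow_neg]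
      congr 1; push_cast; ring
    rw [← mul_assoc, e1, ← mul_assoc, e2] at this
    generalize q ^ (k+1) = p at *
    field_simp at this ⊢
    linear_combination this

lemma h_hasSum (h : ℂ → ℂ) (hh : ∀ t : ℂ, t ≠ 0 → DifferentiableAt ℂ h t) (t : ℂ) (ht : t ≠ 0)
    (hs : Summable (fun n : ℤ => t ^ n * lcoef h n)) :
    HasSum (fun n : ℤ => t ^ n * lcoef h n) (h t) := by
  haveI : Fact (0 < 2 * Real.pi) := ⟨Real.two_pi_pos⟩
  let f : C(AddCircle (2 * Real.pi), ℂ) :=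
    ⟨fun x => h (t * (AddCircle.toCircle x : ℂ)), by
      rw [continuous_iff_continuousAt]
      intro x
      refine ContinuousAt.comp (g := h) (f := fun x : AddCircle (2 * Real.pi) =>
        t * (AddCircle.toCircle x : ℂ)) (hh _ (mul_ne_zero ht (Circle.coe_ne_zero _))).continuousAt ?_
      have := AddCircle.continuous_toCircle (T := 2 * Real.pi)
      fun_prop⟩
  have hc : fourierCoeff f = fun n : ℤ => t ^ n * lcoef h n := by
    ext n
    rw [← lcoef_scale h hh t ht, fourierCoeff_eq_intervalIntegral f n 0, Real.circleAverage_def,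
      zero_add, one_div]
    congr 2
    ext θ
    have e : ((AddCircle.toCircle (θ : AddCircle (2 * Real.pi)) : Circle) : ℂ) = circleMap 0 1 θ := by
      rw [AddCircle.toCircle_apply_mk, div_self Real.two_pi_pos.ne']
      simp [circleMap]
    rw [smul_eq_mul]
    congr 1
    · rw [fourier_apply, AddCircle.toCircle_zsmul, Circle.coe_zpow, e]
    · change h (t * _) = _
      rw [e]
  have := has_pointwise_sum_fourier_series_of_summable (f := f) (hc ▸ hs) 0
  rw [hc] at this
  simpa [f] using this

/-- Every function holomorphic on `ℂ∖{0}` satisfying the q-difference equation of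
the 4₁ knot is a constant multiple of `g^{(0,0)}`. -/
theorem holomorphic_solution_41
    (q : ℂ) (hq0 : 0 < ‖q‖) (hq1 : ‖q‖ < 1)
    (h : ℂ → ℂ) (hhol : ∀ t : ℂ, t ≠ 0 → DifferentiableAt ℂ h t)
    (heq : ∀ t : ℂ, t ≠ 0 →
      t * q * h (q * t) + (1 - 2 * t) * h t + t * q⁻¹ * h (q⁻¹ * t) = 0) :
    ∃ C : ℂ, ∀ t : ℂ, t ≠ 0 → h t = C * g00 t q := by
  have hq : q ≠ 0 := norm_pos_iff.1 hq0
  refine ⟨lcoef h (-1), fun t ht => ?_⟩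
  have hinj : Function.Injective (fun k : ℕ => -1 - (k : ℤ)) := by
    intro a b hab
    simp only at hab
    omega
  have hz : ∀ n : ℤ, n ∉ Set.range (fun k : ℕ => -1 - (k : ℤ)) → t ^ n * lcoef h n = 0 := by
    intro n hn
    have hn0 : 0 ≤ n := by
      by_contra hlt
      exact hn ⟨(-1 - n).toNat, by simp only; omega⟩
    obtain ⟨m, rfl⟩ := Int.eq_ofNat_of_zero_le hn0
    rw [lcoef_nonneg q hq h hhol heq m, mul_zero]
  have hcomp : (fun n : ℤ => t ^ n * lcoef h n) ∘ (fun k : ℕ => -1 - (k : ℤ)) =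
      fun k : ℕ => lcoef h (-1) * (gc q k * t ^ (-1 - (k : ℤ))) := by
    ext k
    simp only [Function.comp]
    rw [lcoef_neg q hq hq1 h hhol heq k]
    ring
  have hsum := gc_summable q hq hq1 t ht
  have hs : Summable (fun n : ℤ => t ^ n * lcoef h n) := by
    rw [← hinj.summable_iff hz, hcomp]
    exact hsum.mul_left _
  have H := h_hasSum h hhol t ht hs
  rw [← hinj.hasSum_iff hz, hcomp] at H
  exact H.unique (hsum.hasSum.mul_left _)
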